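/- If X and Y are shift spaces over 𝒜, each having the d̄-shadowing property, and d̄_M^H(M_σ(X), M_σ(Y)) < ε² for some ε > 0, then d̄^H(X, Y) < 7ε. -/

import Mathlib

open MeasureTheory Filter Topology

namespace DbarPaper

variable {A : Type} [Fintype A] [DecidableEq A] [Inhabited A]
  [TopologicalSpace A] [DiscreteTopology A]
  [MeasurableSpace A] [MeasurableSingletonClass A]

/-- The shift map on the full shift `𝒜^∞ = ℕ → A`. -/
def shift : (ℕ → A) → (ℕ → A) := fun x n => x (n + 1)

/-- A shift space: a nonempty, closed, shift-invariant subset of the full shift. -/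
def ShiftSpace (X : Set (ℕ → A)) : Prop :=
  X.Nonempty ∧ IsClosed X ∧ ∀ x ∈ X, shift x ∈ X

/-- The word `w` appears in the sequence `x`. -/
def occursIn (w : List A) (x : ℕ → A) : Prop :=
  ∃ i : ℕ, w = List.ofFn (fun k : Fin w.length => x (i + (k : ℕ)))

/-- The language of a set `X`: all finite words appearing in points of `X`. -/
def lang (X : Set (ℕ → A)) : Set (List A) := {w | ∃ x ∈ X, occursIn w x}

/-- Words of length `n` in the language of `X`. -/
def langN (n : ℕ) (X : Set (ℕ → A)) : Set (List A) := {w | w ∈ lang X ∧ w.length = n}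

/-- The pseudometric `d̄` on the full shift. -/
noncomputable def dbar (x y : ℕ → A) : ℝ :=
  Filter.limsup
    (fun n => (((Finset.range n).filter (fun j => x j ≠ y j)).card : ℝ) / (n : ℝ))
    Filter.atTop

/-- Hausdorff "distance" between two sets induced by a `ℝ`-valued distance. -/
noncomputable def hausdist {Z : Type*} (d : Z → Z → ℝ) (P Q : Set Z) : ℝ :=
  max (⨆ p : P, ⨅ q : Q, d p q) (⨆ q : Q, ⨅ p : P, d p q)

/-- A probability measure is shift-invariant. -/
def invariantPM (μ : ProbabilityMeasure (ℕ → A)) : Prop :=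
  (μ : Measure (ℕ → A)).map shift = (μ : Measure (ℕ → A))

/-- `M_σ(X)`: shift-invariant Borel probability measures giving `X` full measure. -/
def Msigma (X : Set (ℕ → A)) : Set (ProbabilityMeasure (ℕ → A)) :=
  {μ | invariantPM μ ∧ μ X = 1}

/-- `ξ` is a joining of `μ` and `ν`: a `σ×σ`-invariant measure on the product with
marginals `μ` and `ν`. -/
def IsJoining (ξ : Measure ((ℕ → A) × (ℕ → A))) (μ ν : ProbabilityMeasure (ℕ → A)) : Prop :=
  ξ.map (Prod.map shift shift) = ξ ∧
  ξ.map Prod.fst = (μ : Measure (ℕ → A)) ∧ ξ.map Prod.snd = (ν : Measure (ℕ → A))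

/-- Ornstein's metric `d̄_M` on invariant measures. -/
noncomputable def dbarM (μ ν : ProbabilityMeasure (ℕ → A)) : ℝ :=
  sInf {r : ℝ | ∃ ξ : Measure ((ℕ → A) × (ℕ → A)),
    IsJoining ξ μ ν ∧ r = (ξ {p | p.1 0 ≠ p.2 0}).toReal}

/-- `d̄_M`-stability of a shift space (Austin). -/
def DbarMStable (X : Set (ℕ → A)) : Prop :=
  ∀ ε : ℝ, 0 < ε → ∃ U : Set (ProbabilityMeasure (ℕ → A)), IsOpen U ∧ Msigma X ⊆ U ∧
    ∀ ν ∈ U, invariantPM ν → ∃ μ ∈ Msigma X, dbarM μ ν < ε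

/-- The infinite concatenation of a sequence of (nonempty) words. -/
def concatSeq (w : ℕ → List A) : ℕ → A := fun n =>
  ((List.ofFn (fun i : Fin (n + 1) => w (i : ℕ))).flatten).getD n default

/-- The `d̄`-shadowing property. -/
def DbarShadowing (X : Set (ℕ → A)) : Prop :=
  ∀ ε : ℝ, 0 < ε → ∃ N : ℕ, 0 < N ∧ ∀ w : ℕ → List A,
    (∀ j, w j ∈ lang X) → (∀ j, N ≤ (w j).length) →
    ∃ x' ∈ X, dbar (concatSeq w) x' < ε

/-- `U_n(X)`: the union of cylinders of words of length `n` in the language of `X`. -/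
def cylNbhd (X : Set (ℕ → A)) (n : ℕ) : Set (ℕ → A) :=
  {x | List.ofFn (fun k : Fin n => x (k : ℕ)) ∈ lang X}

/-- The `n`-th (topological) Markov approximation of `X`: all sequences whose subwords of
length `n+1` belong to the language of `X`. -/
def markovApprox (X : Set (ℕ → A)) (n : ℕ) : Set (ℕ → A) :=
  {x | ∀ i : ℕ, List.ofFn (fun k : Fin (n + 1) => x (i + (k : ℕ))) ∈ lang X}

/-- Transitivity, in terms of the language. -/
def TransitiveShift (X : Set (ℕ → A)) : Prop :=
  ∀ u ∈ lang X, ∀ w ∈ lang X, ∃ v : List A, u ++ v ++ w ∈ lang X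

/-- Topological mixing, in terms of the language. -/
def MixingShift (X : Set (ℕ → A)) : Prop :=
  ∀ u ∈ lang X, ∀ w ∈ lang X, ∃ N : ℕ, ∀ m : ℕ, N ≤ m →
    ∃ v : List A, v.length = m ∧ u ++ v ++ w ∈ lang X

/-- Chain mixing: all but finitely many Markov approximations are topologically mixing. -/
def ChainMixing (X : Set (ℕ → A)) : Prop :=
  ∃ N : ℕ, ∀ n : ℕ, N ≤ n → MixingShift (markovApprox X n)

/-- `C` is the measure center of `X`: the smallest shift space contained in `X` of full
measure for every invariant measure of `X`. -/
def IsMeasureCenter (X C : Set (ℕ → A)) : Prop :=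
  ShiftSpace C ∧ C ⊆ X ∧ (∀ μ ∈ Msigma X, μ C = 1) ∧
  ∀ Y : Set (ℕ → A), ShiftSpace Y → Y ⊆ X → (∀ μ ∈ Msigma X, μ Y = 1) → C ⊆ Y

/-- Measure of the cylinder determined by a word of length `n`. -/
noncomputable def cylMeasure (μ : ProbabilityMeasure (ℕ → A)) {n : ℕ} (w : Fin n → A) : ℝ :=
  ((μ : Measure (ℕ → A)) {x | ∀ k : Fin n, x (k : ℕ) = w k}).toReal

/-- Entropy of the partition into cylinders of length `n`. -/
noncomputable def blockEntropy (μ : ProbabilityMeasure (ℕ → A)) (n : ℕ) : ℝ :=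
  -∑ w : Fin n → A, cylMeasure μ w * Real.log (cylMeasure μ w)

/-- Kolmogorov–Sinai entropy of a shift-invariant measure. -/
noncomputable def ksEntropy (μ : ProbabilityMeasure (ℕ → A)) : ℝ :=
  Filter.limsup (fun n => blockEntropy μ n / (n : ℝ)) Filter.atTop

/-- `μ` is ergodic for the shift. -/
def ErgodicPM (μ : ProbabilityMeasure (ℕ → A)) : Prop :=
  Ergodic shift (μ : Measure (ℕ → A))

/-- Ergodic measures are entropy dense in `M_σ(X)`. -/
def EntropyDense (X : Set (ℕ → A)) : Prop :=
  ∀ μ ∈ Msigma X, ∀ U : Set (ProbabilityMeasure (ℕ → A)), IsOpen U → μ ∈ U →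
    ∀ ε : ℝ, 0 < ε →
      ∃ ν ∈ Msigma X, ν ∈ U ∧ ErgodicPM ν ∧ |ksEntropy ν - ksEntropy μ| < ε

/-- Topological entropy of a shift space. -/
noncomputable def topEntropy (X : Set (ℕ → A)) : ℝ :=
  Filter.limsup (fun n => Real.log (Nat.card ↥(langN n X)) / (n : ℝ)) Filter.atTop

/-- The standard metric on the full shift. -/
noncomputable def rho (x y : ℕ → A) : ℝ :=
  open scoped Classical in
  if x = y then 0 else (2 : ℝ) ^ (-((sInf {j : ℕ | x j ≠ y j} : ℕ) : ℤ))

/-- Proximality of a shift space. -/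
def ProximalShift (X : Set (ℕ → A)) : Prop :=
  ∀ x ∈ X, ∀ y ∈ X,
    Filter.liminf (fun n => rho (shift^[n] x) (shift^[n] y)) Filter.atTop = 0

/-- Minimality of a shift space. -/
def MinimalShift (X : Set (ℕ → A)) : Prop :=
  ShiftSpace X ∧ ∀ Y : Set (ℕ → A), ShiftSpace Y → Y ⊆ X → Y = X

/-- An `A`-labeled directed multigraph on vertices `V` with edges `E`. -/
structure LabeledGraph (A V E : Type*) where
  src : E → V
  dst : E → V
  lab : E → A

namespace LabeledGraph

variable {A' V E : Type*}

/-- `es` is a path in `G` from `u` to `v`. -/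
def PathFromTo (G : LabeledGraph A' V E) (es : List E) (u v : V) : Prop :=
  es.Chain' (fun e f => G.dst e = G.src f) ∧
  es.head?.map G.src = some u ∧ es.getLast?.map G.dst = some v

/-- `G` is strongly connected. -/
def StronglyConnected (G : LabeledGraph A' V E) : Prop :=
  ∀ u v : V, ∃ es : List E, G.PathFromTo es u v

/-- `d` is the period of `G`: the gcd of lengths of closed paths. -/
def HasPeriod (G : LabeledGraph A' V E) (d : ℕ) : Prop :=
  (∀ (es : List E) (u : V), G.PathFromTo es u u → d ∣ es.length) ∧
  ∀ d' : ℕ, (∀ (es : List E) (u : V), G.PathFromTo es u u → d' ∣ es.length) → d' ∣ d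

/-- `b` is a safe symbol for `G`. -/
def SafeSymbol (G : LabeledGraph A' V E) (b : A') : Prop :=
  ∀ e : E, ∃ e' : E, G.src e' = G.src e ∧ G.dst e' = G.dst e ∧ G.lab e' = b

/-- The shift space presented by the labeled graph `G`: labels read along infinite paths. -/
def presents (G : LabeledGraph A' V E) : Set (ℕ → A') :=
  {x | ∃ e : ℕ → E, (∀ j, G.dst (e j) = G.src (e (j + 1))) ∧ ∀ j, x j = G.lab (e j)}

end LabeledGraph

/-- The coupling of a family of labeled graphs: an edge labeled `a` from `v` to `v'` exists
iff each `G k` has an edge from `v k` to `v' k` labeled `a`. -/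
def coupling {A' : Type*} {n : ℕ} {V E : Fin n → Type*}
    (G : ∀ k, LabeledGraph A' (V k) (E k)) :
    LabeledGraph A' (∀ k, V k) {p : (∀ k, E k) × A' // ∀ k, (G k).lab (p.1 k) = p.2} where
  src p := fun k => (G k).src (p.1.1 k)
  dst p := fun k => (G k).dst (p.1.1 k)
  lab p := p.1.2

/-- Sofic shift spaces: those presented by some finite labeled graph. -/
def Sofic (X : Set (ℕ → A)) : Prop :=
  ∃ (V E : Type) (_ : Fintype V) (_ : Fintype E) (G : LabeledGraph A V E),
    X = G.presents

/-- The coded shift generated by a finite set of words `B`: the closure of the set of all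
shifts of infinite concatenations of words from `B`. -/
def codedShift (B : Finset (List A)) : Set (ℕ → A) :=
  closure {x | ∃ (b : ℕ → List A) (k : ℕ), (∀ i, b i ∈ B) ∧ x = shift^[k] (concatSeq b)}



set_option linter.unusedSectionVars false

/-- A finite discrete alphabet with measurable singletons carries its Borel σ-algebra. -/
instance borelSpace_of_finite_discrete : BorelSpace A :=
  ⟨by rw [borel_eq_top_of_discrete]; exact MeasurableSpace.ext fun s => by simp [s.toFinite.measurableSet]⟩

theorem continuous_shift : Continuous (shift : (ℕ → A) → ℕ → A) :=
  continuous_pi fun n => continuous_apply (n + 1)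

theorem iterate_shift_apply (x : ℕ → A) (i k : ℕ) : shift^[i] x k = x (i + k) := by
  induction i generalizing k with
  | zero => simp
  | succ i ih =>
    rw [Function.iterate_succ_apply', shift, ih]
    congr 1; omega

theorem ShiftSpace.iterate_mem {X : Set (ℕ → A)} (hX : ShiftSpace X) {x : ℕ → A} (hx : x ∈ X)
    (i : ℕ) : shift^[i] x ∈ X := by
  induction i with
  | zero => simpa
  | succ i ih => rw [Function.iterate_succ_apply']; exact hX.2.2 _ ih

/-- The empirical measure of the orbit segment `x, σ x, …, σⁿ x`. -/
noncomputable def empirical (x : ℕ → A) (n : ℕ) : Measure (ℕ → A) :=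
  ((n + 1 : ℕ) : ENNReal)⁻¹ • ∑ i ∈ Finset.range (n + 1), Measure.dirac (shift^[i] x)

open Classical in
theorem empirical_apply (x : ℕ → A) (n : ℕ) {B : Set (ℕ → A)} (hB : MeasurableSet B) :
    empirical x n B = ((n + 1 : ℕ) : ENNReal)⁻¹ *
      (((Finset.range (n + 1)).filter fun i => shift^[i] x ∈ B).card : ENNReal) := by
  simp [empirical, Measure.dirac_apply' _ hB, Set.indicator_apply]

instance empirical_isProbabilityMeasure (x : ℕ → A) (n : ℕ) :
    IsProbabilityMeasure (empirical x n) :=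
  ⟨by
    rw [empirical_apply x n MeasurableSet.univ]
    simp only [Set.mem_univ, Finset.filter_true, Finset.card_range]
    exact ENNReal.inv_mul_cancel (by simp) (by simp)⟩

/-- The empirical measure as a bundled probability measure. -/
noncomputable def empiricalPM (x : ℕ → A) (n : ℕ) : ProbabilityMeasure (ℕ → A) :=
  ⟨empirical x n, inferInstance⟩

theorem integral_empiricalPM (x : ℕ → A) (n : ℕ) (f : BoundedContinuousFunction (ℕ → A) ℝ) :
    ∫ z, f z ∂(empiricalPM x n : Measure (ℕ → A)) =
      ((n : ℝ) + 1)⁻¹ * ∑ i ∈ Finset.range (n + 1), f (shift^[i] x) := by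
  change ∫ z, f z ∂(empirical x n) = _
  rw [empirical, integral_smul_measure, integral_finsetSum_measure]
  · have : (((n + 1 : ℕ) : ENNReal)⁻¹).toReal = ((n : ℝ) + 1)⁻¹ := by
      rw [ENNReal.toReal_inv, ENNReal.toReal_natCast]; push_cast; rfl
    simp only [integral_dirac, this, smul_eq_mul]
  · intro i _
    exact f.integrable _

theorem invariantPM_of_tendsto_empirical (x : ℕ → A) {F : Filter ℕ} [F.NeBot] (hF : F ≤ atTop)
    {μ : ProbabilityMeasure (ℕ → A)} (h : Tendsto (empiricalPM x) F (𝓝 μ)) :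
    invariantPM μ := by
  have hc : Continuous (shift : (ℕ → A) → ℕ → A) := continuous_shift
  have h1 := ProbabilityMeasure.tendsto_map_of_tendsto_of_continuous _ _ h hc
  suffices h2 : Tendsto (fun n => (empiricalPM x n).map hc.measurable.aemeasurable) F (𝓝 μ) by
    have := tendsto_nhds_unique h1 h2
    have := congrArg (fun ν : ProbabilityMeasure (ℕ → A) => (ν : Measure (ℕ → A))) this
    simpa [invariantPM] using this
  rw [ProbabilityMeasure.tendsto_iff_forall_integral_tendsto] at h ⊢
  intro f
  have hdiff : Tendsto (fun n : ℕ => ((n : ℝ) + 1)⁻¹ * (f (shift^[n + 1] x) - f x)) atTop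
      (𝓝 0) := by
    have hz : Tendsto (fun n : ℕ => ((n : ℝ) + 1)⁻¹) atTop (𝓝 0) := by
      simpa [one_div] using tendsto_one_div_add_atTop_nhds_zero_nat (𝕜 := ℝ)
    refine hz.zero_mul_isBoundedUnder_le ?_
    refine isBoundedUnder_of ⟨‖f‖ + ‖f‖, fun n => ?_⟩
    exact (norm_sub_le _ _).trans (add_le_add (f.norm_coe_le_norm _) (f.norm_coe_le_norm _))
  have hsum := (h f).add (hdiff.mono_left hF)
  rw [add_zero] at hsum
  refine hsum.congr fun n => ?_
  have hmap : ∫ z, f z ∂((empiricalPM x n).map hc.measurable.aemeasurable : Measure (ℕ → A)) =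
      ∫ z, f.compContinuous ⟨shift, hc⟩ z ∂(empiricalPM x n : Measure (ℕ → A)) := by
    rw [ProbabilityMeasure.toMeasure_map, integral_map hc.measurable.aemeasurable
      f.continuous.aestronglyMeasurable]
    rfl
  rw [hmap, integral_empiricalPM, integral_empiricalPM, ← mul_add]
  congr 1
  have h1 := Finset.sum_range_succ (fun i => f (shift^[i] x)) (n + 1)
  have h2 := Finset.sum_range_succ' (fun i => f (shift^[i] x)) (n + 1)
  simp only [BoundedContinuousFunction.compContinuous_apply, ContinuousMap.coe_mk,
    ← Function.iterate_succ_apply']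
  simp only [Function.iterate_zero, id_eq] at h2
  linarith

/-- Along any filter finer than `atTop`, some ultrafilter makes the empirical measures of a point
of `X` converge to an invariant measure on `X`. -/
theorem exists_tendsto_empirical {X : Set (ℕ → A)} (hX : ShiftSpace X) {x : ℕ → A} (hx : x ∈ X)
    (F : Filter ℕ) [F.NeBot] (hF : F ≤ atTop) :
    ∃ μ ∈ Msigma X, ∃ U : Ultrafilter ℕ, (U : Filter ℕ) ≤ F ∧
      Tendsto (empiricalPM x) U (𝓝 μ) := by
  set U := Ultrafilter.of F
  have hU : (U : Filter ℕ) ≤ F := Ultrafilter.of_le F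
  obtain ⟨μ, -, hμ⟩ := isCompact_univ.ultrafilter_le_nhds (U.map (empiricalPM x)) (by simp)
  have hμ : Tendsto (empiricalPM x) U (𝓝 μ) := hμ
  refine ⟨μ, ⟨invariantPM_of_tendsto_empirical x (hU.trans hF) hμ, ?_⟩, U, hU, hμ⟩
  have hlim := ProbabilityMeasure.limsup_measure_closed_le_of_tendsto hμ hX.2.1
  have hone : ∀ n, (empiricalPM x n : Measure (ℕ → A)) X = 1 := fun n => by
    change empirical x n X = 1
    rw [empirical_apply x n hX.2.1.measurableSet]
    simp only [hX.iterate_mem hx, Finset.filter_true, Finset.card_range]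
    exact ENNReal.inv_mul_cancel (by simp) (by simp)
  simp only [hone, limsup_const] at hlim
  have h1 : (μ : Measure (ℕ → A)) X = 1 := le_antisymm prob_le_one hlim
  rw [← ENNReal.coe_inj]
  simpa using h1

theorem Msigma_nonempty {X : Set (ℕ → A)} (hX : ShiftSpace X) : (Msigma X).Nonempty := by
  obtain ⟨x, hx⟩ := hX.1
  obtain ⟨μ, hμ, -⟩ := exists_tendsto_empirical hX hx atTop le_rfl
  exact ⟨μ, hμ⟩

open Classical in
/-- Visits of an orbit in `X` to a clopen set are eventually less frequent than any strict upper
bound for the measures of the set. -/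
theorem eventually_count_visits_lt {X : Set (ℕ → A)} (hX : ShiftSpace X) {x : ℕ → A} (hx : x ∈ X)
    {B : Set (ℕ → A)} (hB : IsClopen B) {c : ℝ}
    (hc : ∀ μ ∈ Msigma X, (μ : Measure (ℕ → A)).real B < c) :
    ∀ᶠ n : ℕ in atTop,
      (Nat.count (fun i => shift^[i] x ∈ B) n : ℝ) < c * n := by
  simp only [Nat.count_eq_card_filter_range]
  rw [← map_add_atTop_eq_nat 1, eventually_map]
  by_contra hcon
  rw [not_eventually] at hcon
  set S : Set ℕ := {n | ¬ (((Finset.range (n + 1)).filter fun i => shift^[i] x ∈ B).card : ℝ) <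
    c * (n + 1 : ℕ)}
  have : (atTop ⊓ 𝓟 S).NeBot := frequently_mem_iff_neBot.1 hcon
  obtain ⟨μ, hμ, U, hU, hlim⟩ := exists_tendsto_empirical hX hx (atTop ⊓ 𝓟 S) inf_le_left
  have h1 := ProbabilityMeasure.tendsto_measure_of_isClopen_of_tendsto hlim hB
  have h1 : Tendsto (fun n => (empirical x n).real B) U (𝓝 ((μ : Measure (ℕ → A)).real B)) := by
    exact (NNReal.continuous_coe.tendsto _).comp h1
  have hSU : S ∈ (U : Filter ℕ) := hU (mem_inf_of_right (mem_principal_self S))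
  have h2 : c ≤ (μ : Measure (ℕ → A)).real B := by
    refine ge_of_tendsto h1 ?_
    filter_upwards [hSU] with n hn
    have hn := not_lt.1 hn
    have hpos : (0 : ℝ) < (n + 1 : ℕ) := by positivity
    rw [Measure.real, empirical_apply x n hB.2.measurableSet, ENNReal.toReal_mul,
      ENNReal.toReal_inv, ENNReal.toReal_natCast, ENNReal.toReal_natCast, inv_mul_eq_div,
      le_div_iff₀ hpos]
    exact hn
  exact absurd (hc μ hμ) (not_lt.2 h2)

/-- The number of disagreements of two sequences among their first `n` coordinates. -/
def mismatches (x y : ℕ → A) (n : ℕ) : ℕ := Nat.count (fun j => x j ≠ y j) n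

theorem mismatches_le (x y : ℕ → A) (n : ℕ) : mismatches x y n ≤ n := Nat.count_le _

theorem mismatches_triangle (x y z : ℕ → A) (n : ℕ) :
    mismatches x z n ≤ mismatches x y n + mismatches y z n := by
  simp only [mismatches, Nat.count_eq_card_filter_range]
  refine (Finset.card_le_card fun j hj => ?_).trans (Finset.card_union_le _ _)
  simp only [Finset.mem_union, Finset.mem_filter] at hj ⊢
  by_cases h : x j = y j
  · exact Or.inr ⟨hj.1, h ▸ hj.2⟩
  · exact Or.inl ⟨hj.1, h⟩

theorem mismatches_congr {x x' y y' : ℕ → A} {n : ℕ} (hx : ∀ j < n, x j = x' j)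
    (hy : ∀ j < n, y j = y' j) : mismatches x y n = mismatches x' y' n := by
  simp only [mismatches, Nat.count_eq_card_filter_range]
  congr 1
  refine Finset.filter_congr fun j hj => ?_
  rw [hx j (Finset.mem_range.1 hj), hy j (Finset.mem_range.1 hj)]

theorem dbar_eq_limsup (x y : ℕ → A) :
    dbar x y = limsup (fun n : ℕ => (mismatches x y n : ℝ) / n) atTop := by
  simp only [dbar, mismatches, Nat.count_eq_card_filter_range]

theorem mismatches_div_nonneg (x y : ℕ → A) (n : ℕ) : 0 ≤ (mismatches x y n : ℝ) / n := by
  positivity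

theorem mismatches_div_le_one (x y : ℕ → A) (n : ℕ) : (mismatches x y n : ℝ) / n ≤ 1 :=
  div_le_one_of_le₀ (by exact_mod_cast mismatches_le x y n) n.cast_nonneg

theorem isBoundedUnder_mismatches (x y : ℕ → A) :
    IsBoundedUnder (· ≤ ·) atTop fun n : ℕ => (mismatches x y n : ℝ) / n :=
  isBoundedUnder_of ⟨1, mismatches_div_le_one x y⟩

theorem isCoboundedUnder_mismatches (x y : ℕ → A) :
    IsCoboundedUnder (· ≤ ·) atTop fun n : ℕ => (mismatches x y n : ℝ) / n :=
  (isBoundedUnder_of ⟨0, mismatches_div_nonneg x y⟩ :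
    IsBoundedUnder (· ≥ ·) atTop _).isCoboundedUnder_flip

theorem dbar_nonneg (x y : ℕ → A) : 0 ≤ dbar x y := by
  rw [dbar_eq_limsup]
  exact le_limsup_of_frequently_le (Frequently.of_forall (mismatches_div_nonneg x y))
    (isBoundedUnder_mismatches x y)

theorem dbar_le_of_eventually {x y : ℕ → A} {c d : ℝ}
    (h : ∀ᶠ n : ℕ in atTop, (mismatches x y n : ℝ) ≤ c * n + d) : dbar x y ≤ c := by
  have hlim : Tendsto (fun n : ℕ => c + d / (n : ℝ)) atTop (𝓝 c) := by
    simpa using (tendsto_const_div_atTop_nhds_zero_nat d).const_add c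
  rw [dbar_eq_limsup, ← hlim.limsup_eq]
  refine limsup_le_limsup ?_ (isCoboundedUnder_mismatches x y) hlim.isBoundedUnder_le
  filter_upwards [h, eventually_gt_atTop 0] with n hn hpos
  have hpos : (0 : ℝ) < n := by exact_mod_cast hpos
  rw [div_le_iff₀ hpos, add_mul, div_mul_cancel₀ _ hpos.ne']
  exact hn

theorem dbar_le_one (x y : ℕ → A) : dbar x y ≤ 1 :=
  dbar_le_of_eventually (d := 0) <| Eventually.of_forall fun n => by
    simpa using mismatches_le x y n

theorem eventually_mismatches_le_of_dbar_lt {x y : ℕ → A} {c : ℝ} (h : dbar x y < c) :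
    ∀ᶠ n : ℕ in atTop, (mismatches x y n : ℝ) ≤ c * n := by
  rw [dbar_eq_limsup] at h
  filter_upwards [eventually_lt_of_limsup_lt h (isBoundedUnder_mismatches x y),
    eventually_gt_atTop 0] with n hn hpos
  have hpos : (0 : ℝ) < n := by exact_mod_cast hpos
  exact ((div_lt_iff₀ hpos).1 hn).le

/-- The points whose first `N` symbols disagree with every point of `Y` in proportion at
least `ε`. -/
def farFrom (Y : Set (ℕ → A)) (N : ℕ) (ε : ℝ) : Set (ℕ → A) :=
  {x | ∀ y ∈ Y, ε * N ≤ mismatches x y N}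

theorem isClopen_farFrom (Y : Set (ℕ → A)) (N : ℕ) (ε : ℝ) : IsClopen (farFrom Y N ε) := by
  let r : (ℕ → A) → (Fin N → A) := fun x k => x k
  have hr : Continuous r := continuous_pi fun k => continuous_apply (k : ℕ)
  have : farFrom Y N ε = r ⁻¹' (r '' farFrom Y N ε) := by
    refine (Set.subset_preimage_image r _).antisymm ?_
    rintro x ⟨x', hx', hxx'⟩ y hy
    rw [mismatches_congr (x' := x') (y' := y) (fun j hj => (congrFun hxx' ⟨j, hj⟩).symm) fun _ _ => rfl]
    exact hx' y hy
  rw [this]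
  exact (isClopen_discrete _).preimage hr

theorem IsJoining.isProbabilityMeasure {ξ : Measure ((ℕ → A) × (ℕ → A))}
    {μ ν : ProbabilityMeasure (ℕ → A)} (h : IsJoining ξ μ ν) : IsProbabilityMeasure ξ := by
  have : IsProbabilityMeasure (ξ.map Prod.fst) := by rw [h.2.1]; infer_instance
  exact Measure.isProbabilityMeasure_of_map Prod.fst

theorem isJoining_prod {μ ν : ProbabilityMeasure (ℕ → A)} (hμ : invariantPM μ)
    (hν : invariantPM ν) :
    IsJoining ((μ : Measure (ℕ → A)).prod (ν : Measure (ℕ → A))) μ ν := by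
  have hs : Measurable (shift : (ℕ → A) → ℕ → A) := continuous_shift.measurable
  refine ⟨?_, by simp, by simp⟩
  rw [← Measure.map_prod_map _ _ hs hs, hμ, hν]

theorem dbarM_nonneg (μ ν : ProbabilityMeasure (ℕ → A)) : 0 ≤ dbarM μ ν :=
  Real.sInf_nonneg fun _ ⟨_, _, hr⟩ => hr ▸ ENNReal.toReal_nonneg

theorem dbarM_le_one (μ ν : ProbabilityMeasure (ℕ → A)) : dbarM μ ν ≤ 1 := by
  set S := {r : ℝ | ∃ ξ : Measure ((ℕ → A) × (ℕ → A)),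
    IsJoining ξ μ ν ∧ r = (ξ {p | p.1 0 ≠ p.2 0}).toReal}
  have hbdd : BddBelow S := ⟨0, fun _ ⟨_, _, hr⟩ => hr ▸ ENNReal.toReal_nonneg⟩
  change sInf S ≤ 1
  by_cases h : S.Nonempty
  · obtain ⟨r, ξ, hξ, rfl⟩ := h
    have := hξ.isProbabilityMeasure
    exact (csInf_le hbdd ⟨ξ, hξ, rfl⟩).trans
      (measureReal_le_one (μ := ξ) (s := {p | p.1 0 ≠ p.2 0}))
  · rw [Set.not_nonempty_iff_eq_empty.1 h, Real.sInf_empty]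
    exact zero_le_one

theorem exists_joining_lt {μ ν : ProbabilityMeasure (ℕ → A)} (hμ : invariantPM μ)
    (hν : invariantPM ν) {c : ℝ} (h : dbarM μ ν < c) :
    ∃ ξ, IsJoining ξ μ ν ∧ ξ.real {p | p.1 0 ≠ p.2 0} < c := by
  obtain ⟨_, ⟨ξ, hξ, rfl⟩, hlt⟩ := exists_lt_of_csInf_lt
    (s := {r : ℝ | ∃ ξ : Measure ((ℕ → A) × (ℕ → A)),
      IsJoining ξ μ ν ∧ r = (ξ {p | p.1 0 ≠ p.2 0}).toReal})
    ⟨_, _, isJoining_prod hμ hν, rfl⟩ h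
  exact ⟨ξ, hξ, hlt⟩

theorem measurableSet_coord_ne (k : ℕ) :
    MeasurableSet {p : (ℕ → A) × (ℕ → A) | p.1 k ≠ p.2 k} :=
  (measurableSet_eq_fun ((measurable_pi_apply k).comp measurable_fst)
    ((measurable_pi_apply k).comp measurable_snd)).compl

theorem IsJoining.measureReal_coord_ne {ξ : Measure ((ℕ → A) × (ℕ → A))}
    {μ ν : ProbabilityMeasure (ℕ → A)} (h : IsJoining ξ μ ν) (k : ℕ) :
    ξ.real {p | p.1 k ≠ p.2 k} = ξ.real {p | p.1 0 ≠ p.2 0} := by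
  have hs : Measurable (shift : (ℕ → A) → ℕ → A) := continuous_shift.measurable
  induction k with
  | zero => rfl
  | succ k ih =>
    rw [← ih]
    conv_rhs => rw [← h.1]
    rw [map_measureReal_apply (hs.prodMap hs) (measurableSet_coord_ne k)]
    rfl

/-- Markov's inequality for the disagreement count under a joining. -/
theorem IsJoining.mul_measureReal_farFrom_le {ξ : Measure ((ℕ → A) × (ℕ → A))}
    {μ ν : ProbabilityMeasure (ℕ → A)} (h : IsJoining ξ μ ν) {Y : Set (ℕ → A)} (hν : ν Y = 1)
    (hY : MeasurableSet Y) {N : ℕ} (hN : 0 < N) (ε : ℝ) :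
    ε * (μ : Measure (ℕ → A)).real (farFrom Y N ε) ≤ ξ.real {p | p.1 0 ≠ p.2 0} := by
  have := h.isProbabilityMeasure
  let f : (ℕ → A) × (ℕ → A) → ℝ := fun p =>
    ∑ k ∈ Finset.range N, {p : (ℕ → A) × (ℕ → A) | p.1 k ≠ p.2 k}.indicator (fun _ => 1) p
  have hf : ∀ p, f p = mismatches p.1 p.2 N := fun p => by
    simp [f, mismatches, Nat.count_eq_card_filter_range, Set.indicator_apply,
      Finset.sum_ite]
  have hi : ∀ k, Integrable
      ({p : (ℕ → A) × (ℕ → A) | p.1 k ≠ p.2 k}.indicator (fun _ => (1 : ℝ))) ξ := fun k =>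
    (integrable_const 1).indicator (measurableSet_coord_ne k)
  have hint : ∫ p, f p ∂ξ = N * ξ.real {p | p.1 0 ≠ p.2 0} := by
    rw [integral_finsetSum _ fun k _ => hi k]
    simp_rw [integral_indicator_const _ (measurableSet_coord_ne _), h.measureReal_coord_ne]
    simp
  have hmarkov := mul_meas_ge_le_integral_of_nonneg (μ := ξ) (f := f)
    (Eventually.of_forall fun p => by simp [hf]) (integrable_finsetSum _ fun k _ => hi k) (ε * N)
  have hfst : (μ : Measure (ℕ → A)).real (farFrom Y N ε) = ξ.real (Prod.fst ⁻¹' farFrom Y N ε) := by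
    rw [← h.2.1, map_measureReal_apply measurable_fst (isClopen_farFrom Y N ε).2.measurableSet]
  have hsnd : ∀ᵐ p ∂ξ, p.2 ∈ Y := by
    have : ∀ᵐ y ∂(ν : Measure (ℕ → A)), y ∈ Y := by
      refine (mem_ae_iff_prob_eq_one hY).2 ?_
      rw [← ProbabilityMeasure.ennreal_coeFn_eq_coeFn_toMeasure, hν, ENNReal.coe_one]
    rw [← h.2.2] at this
    exact ae_of_ae_map measurable_snd.aemeasurable this
  have hle : ξ.real (Prod.fst ⁻¹' farFrom Y N ε) ≤ ξ.real {p | ε * N ≤ f p} := by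
    refine ENNReal.toReal_mono (measure_ne_top _ _) (measure_mono_ae ?_)
    filter_upwards [hsnd] with p hp hfar
    change ε * N ≤ f p
    rw [hf]
    exact hfar _ hp
  have hN' : (0 : ℝ) < N := by exact_mod_cast hN
  rw [hint] at hmarkov
  rw [hfst]
  by_cases hε : 0 ≤ ε
  · refine le_of_mul_le_mul_left ?_ hN'
    calc N * (ε * ξ.real (Prod.fst ⁻¹' farFrom Y N ε))
        = ε * N * ξ.real (Prod.fst ⁻¹' farFrom Y N ε) := by ring
      _ ≤ ε * N * ξ.real {p | ε * N ≤ f p} := by gcongr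
      _ ≤ _ := hmarkov
  · exact (mul_nonpos_of_nonpos_of_nonneg (not_le.1 hε).le measureReal_nonneg).trans
      measureReal_nonneg

theorem length_flatten_blocks {p : ℕ → ℕ} (hp : StrictMono p) (h0 : p 0 = 0)
    (y : ℕ → ℕ → A) (m : ℕ) :
    (List.ofFn fun i : Fin m =>
      List.ofFn fun k : Fin (p (i + 1) - p i) => y i k).flatten.length = p m := by
  induction m with
  | zero => simp [h0]
  | succ m ih =>
    have : p m < p (m + 1) := hp (Nat.lt_succ_self m)
    rw [List.ofFn_succ_last, List.flatten_append, List.length_append]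
    simp only [Fin.val_castSucc, ih, List.flatten_singleton, List.length_ofFn, Fin.val_last]
    omega

theorem getD_flatten_blocks {p : ℕ → ℕ} (hp : StrictMono p) (h0 : p 0 = 0)
    (y : ℕ → ℕ → A) {j k : ℕ} (hk : k < p (j + 1) - p j) {m : ℕ} (hj : j < m) (d : A) :
    (List.ofFn fun i : Fin m =>
      List.ofFn fun k : Fin (p (i + 1) - p i) => y i k).flatten.getD (p j + k) d = y j k := by
  induction m with
  | zero => omega
  | succ m ih =>
    have hlen := length_flatten_blocks hp h0 y m
    rw [List.ofFn_succ_last, List.flatten_append]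
    simp only [Fin.val_castSucc, List.flatten_singleton, Fin.val_last]
    rcases Nat.lt_succ_iff_lt_or_eq.1 hj with hj | rfl
    · have := hp.monotone (show j + 1 ≤ m from hj)
      rw [List.getD_append _ _ _ _ (by omega), ih hj]
    · rw [List.getD_append_right _ _ _ _ (by omega), hlen, Nat.add_sub_cancel_left,
        List.getD_eq_getElem _ _ (by simpa using hk)]
      simp

/-- The concatenation of initial blocks of the sequences `y j`, cut at the positions `p j`. -/
theorem concatSeq_blocks {p : ℕ → ℕ} (hp : StrictMono p) (h0 : p 0 = 0) (y : ℕ → ℕ → A)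
    {j k : ℕ} (hk : k < p (j + 1) - p j) :
    concatSeq (fun i => List.ofFn fun k : Fin (p (i + 1) - p i) => y i k) (p j + k) = y j k := by
  have := hp.le_apply (x := j)
  exact getD_flatten_blocks hp h0 y hk (by omega) default

theorem ofFn_mem_lang {Y : Set (ℕ → A)} {y : ℕ → A} (hy : y ∈ Y) (n : ℕ) :
    (List.ofFn fun k : Fin n => y k) ∈ lang Y :=
  ⟨y, hy, 0, List.ext_getElem (by simp) fun i h₁ h₂ => by simp⟩

theorem mismatches_add (x z : ℕ → A) (a k : ℕ) :
    mismatches x z (a + k) = mismatches x z a + mismatches (shift^[a] x) (shift^[a] z) k := by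
  simp only [mismatches, Nat.count_add, iterate_shift_apply]

open Classical in
/-- If the initial segments of length `N` of the points on the orbit of `x` can be matched in `Y`
up to a proportion `ε` infinitely often, then `x` follows a concatenation of long words of `Y`
up to this proportion and the unmatched positions. -/
theorem exists_concatSeq_mismatches_le {Y : Set (ℕ → A)} (hY : Y.Nonempty) {N : ℕ} (hN : 0 < N)
    {ε : ℝ} (hε : 0 ≤ ε) (x : ℕ → A) (hx : ∀ m, ∃ i, m ≤ i ∧ shift^[i] x ∉ farFrom Y N ε) :
    ∃ w : ℕ → List A, (∀ j, w j ∈ lang Y) ∧ (∀ j, N ≤ (w j).length) ∧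
      ∀ n : ℕ, (mismatches x (concatSeq w) n : ℝ) ≤
        Nat.count (fun i => shift^[i] x ∈ farFrom Y N ε) n + ε * n + 2 * N := by
  obtain ⟨y₀, hy₀⟩ := hY
  have hy : ∀ i, ∃ y ∈ Y, shift^[i] x ∉ farFrom Y N ε →
      (mismatches (shift^[i] x) y N : ℝ) ≤ ε * N := fun i => by
    by_cases h : shift^[i] x ∈ farFrom Y N ε
    · exact ⟨y₀, hy₀, fun h' => absurd h h'⟩
    · simp only [farFrom, Set.mem_ofPred_eq, not_forall, not_le] at h
      obtain ⟨y, hyY, hlt⟩ := h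
      exact ⟨y, hyY, fun _ => hlt.le⟩
  choose y hyY hyε using hy
  let next : ℕ → ℕ := fun m => Nat.find (hx (m + N))
  have next_le : ∀ m, m + N ≤ next m := fun m => (Nat.find_spec (hx (m + N))).1
  have next_good : ∀ m, shift^[next m] x ∉ farFrom Y N ε := fun m =>
    (Nat.find_spec (hx (m + N))).2
  have next_min : ∀ m i, m + N ≤ i → i < next m → shift^[i] x ∈ farFrom Y N ε := fun m i h₁ h₂ => by
    by_contra h
    exact Nat.find_min (hx (m + N)) h₂ ⟨h₁, h⟩
  let p : ℕ → ℕ := fun j => next^[j] 0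
  have hp0 : p 0 = 0 := rfl
  have hps : ∀ j, p (j + 1) = next (p j) := fun j => Function.iterate_succ_apply' _ _ _
  have hp : StrictMono p := strictMono_nat_of_lt_succ fun j => by
    have := next_le (p j)
    rw [hps]; omega
  set w : ℕ → List A := fun j => List.ofFn fun k : Fin (p (j + 1) - p j) => y (p j) k with hw
  set bad : ℕ → ℕ := Nat.count fun i => shift^[i] x ∈ farFrom Y N ε with hbad
  have bad_mono : Monotone bad := Nat.count_monotone _
  have hblock : ∀ j k, k ≤ p (j + 1) - p j → mismatches x (concatSeq w) (p j + k) =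
      mismatches x (concatSeq w) (p j) + mismatches (shift^[p j] x) (y (p j)) k := fun j k hk => by
    rw [mismatches_add]
    congr 1
    refine mismatches_congr (fun _ _ => rfl) fun i hi => ?_
    rw [iterate_shift_apply]
    exact concatSeq_blocks hp hp0 (fun j => y (p j)) (by omega)
  have hlong : ∀ j k, p j + N + k ≤ p (j + 1) →
      mismatches (shift^[p j] x) (y (p j)) (N + k) + bad (p j) ≤
        mismatches (shift^[p j] x) (y (p j)) N + bad (p j + N + k) := fun j k hk => by
    have h₁ := mismatches_add (shift^[p j] x) (y (p j)) N k
    have h₂ := mismatches_le (shift^[N] (shift^[p j] x)) (shift^[N] (y (p j))) k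
    have h₃ : bad (p j + N + k) = bad (p j + N) + k := by
      rw [hbad, Nat.count_add, Nat.count_of_forall (n := k)]
      intro i hi
      exact next_min (p j) _ (by omega) (by rw [← hps]; omega)
    have h₄ := bad_mono (Nat.le_add_right (p j) N)
    omega
  have hcut : ∀ j, (mismatches x (concatSeq w) (p j) : ℝ) ≤ bad (p j) + ε * p j + N := fun j => by
    induction j with
    | zero =>
      simp only [hp0, mismatches, Nat.count_zero, Nat.cast_zero, mul_zero, add_zero]
      positivity
    | succ j ih =>
      have hle := next_le (p j)
      rw [← hps] at hle
      obtain ⟨k, hk⟩ := Nat.exists_eq_add_of_le hle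
      have h₁ := hblock j (N + k) (by omega)
      have h₂ := hlong j k hk.ge
      rw [← add_assoc, ← hk] at h₁
      rw [← hk] at h₂
      have h₁' : (mismatches x (concatSeq w) (p (j + 1)) : ℝ) = mismatches x (concatSeq w) (p j) +
        mismatches (shift^[p j] x) (y (p j)) (N + k) := by exact_mod_cast h₁
      have h₂' : (mismatches (shift^[p j] x) (y (p j)) (N + k) : ℝ) + bad (p j) ≤
        mismatches (shift^[p j] x) (y (p j)) N + bad (p (j + 1)) := by exact_mod_cast h₂
      have hpj : (p j : ℝ) + N ≤ p (j + 1) := by exact_mod_cast hle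
      have hεp := mul_le_mul_of_nonneg_left hpj hε
      have hεN : 0 ≤ ε * N := by positivity
      cases j with
      | zero =>
        have h₃ : (mismatches (shift^[p 0] x) (y (p 0)) N : ℝ) ≤ N := by
          exact_mod_cast mismatches_le _ _ _
        have h₄ : (mismatches x (concatSeq w) (p 0) : ℝ) = 0 := by simp [hp0, mismatches]
        have h₅ : (p 0 : ℝ) = 0 := by simp [hp0]
        rw [h₅] at hεp
        have : (0 : ℝ) ≤ bad (p 0) := by positivity
        linarith
      | succ j =>
        have h₃ := hyε (p (j + 1)) (by rw [hps]; exact next_good _)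
        linarith
  refine ⟨w, fun j => ofFn_mem_lang (hyY _) _, fun j => ?_, fun n => ?_⟩
  · have := next_le (p j)
    rw [← hps] at this
    simp only [hw, List.length_ofFn]
    omega
  · obtain ⟨j, hj₁, hj₂⟩ : ∃ j, p j ≤ n ∧ n < p (j + 1) := by
      have hex : ∃ j, n < p (j + 1) := ⟨n, hp.le_apply⟩
      refine ⟨Nat.find hex, ?_, Nat.find_spec hex⟩
      rcases h : Nat.find hex with _ | i
      · simp [hp0]
      · exact not_lt.1 (Nat.find_min hex (by omega : i < _))
    obtain ⟨k, rfl⟩ := Nat.exists_eq_add_of_le hj₁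
    have h₁ := hblock j k (by omega)
    have h₂ : mismatches (shift^[p j] x) (y (p j)) k + bad (p j) ≤ N + bad (p j + k) := by
      rcases le_total k N with hkN | hkN
      · exact add_le_add ((mismatches_le _ _ _).trans hkN) (bad_mono (by omega))
      · obtain ⟨i, rfl⟩ := Nat.exists_eq_add_of_le hkN
        rw [← add_assoc]
        exact (hlong j i (by omega)).trans (Nat.add_le_add_right (mismatches_le _ _ _) _)
    have h₁' : (mismatches x (concatSeq w) (p j + k) : ℝ) = mismatches x (concatSeq w) (p j) +
      mismatches (shift^[p j] x) (y (p j)) k := by exact_mod_cast h₁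
    have h₂' : (mismatches (shift^[p j] x) (y (p j)) k : ℝ) + bad (p j) ≤
      N + bad (p j + k) := by exact_mod_cast h₂
    have hεk : ε * p j ≤ ε * (p j + k : ℕ) := by gcongr
    linarith [hcut j]

theorem bddAbove_range_iInf {Z : Type*} {d : Z → Z → ℝ} (h0 : ∀ a b, 0 ≤ d a b)
    (h1 : ∀ a b, d a b ≤ 1) (P Q : Set Z) :
    BddAbove (Set.range fun p : P => ⨅ q : Q, d p q) := by
  refine ⟨1, ?_⟩
  rintro _ ⟨p, rfl⟩
  rcases isEmpty_or_nonempty Q with hQ | ⟨⟨q⟩⟩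
  · simp [Real.iInf_of_isEmpty]
  · exact ciInf_le_of_le ⟨0, by rintro _ ⟨b, rfl⟩; exact h0 _ _⟩ q (h1 _ _)

/-- One half of the comparison of Hausdorff distances: every point of `X` is uniformly close to
`Y` once every invariant measure on `X` is close to one on `Y`. -/
theorem exists_dbar_le {X Y : Set (ℕ → A)} (hX : ShiftSpace X) (hY : ShiftSpace Y)
    (hsh : DbarShadowing Y) {ε : ℝ} (hε : 0 < ε)
    (h : ∀ μ ∈ Msigma X, ∃ ν ∈ Msigma Y, dbarM μ ν < ε ^ 2) :
    ∀ x ∈ X, ∃ y ∈ Y, dbar x y ≤ 3 * ε := by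
  intro x hx
  obtain ⟨y₀, hy₀⟩ := hY.1
  rcases le_or_gt 1 ε with hε1 | hε1
  · exact ⟨y₀, hy₀, (dbar_le_one x y₀).trans (by linarith)⟩
  obtain ⟨N, hN, hshadow⟩ := hsh ε hε
  have hfar : ∀ μ ∈ Msigma X, (μ : Measure (ℕ → A)).real (farFrom Y N ε) < ε := fun μ hμ => by
    obtain ⟨ν, hν, hlt⟩ := h μ hμ
    obtain ⟨ξ, hξ, hξlt⟩ := exists_joining_lt hμ.1 hν.1 hlt
    have := hξ.mul_measureReal_farFrom_le hν.2 hY.2.1.measurableSet hN ε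
    refine lt_of_mul_lt_mul_left (this.trans_lt ?_) hε.le
    rwa [← sq]
  have hvisit := eventually_count_visits_lt hX hx (isClopen_farFrom Y N ε) hfar
  have hgood : ∀ m, ∃ i, m ≤ i ∧ shift^[i] x ∉ farFrom Y N ε := by
    classical
    intro m
    by_contra! hall
    obtain ⟨n, hn, hmn, hlarge⟩ := (hvisit.and ((eventually_ge_atTop m).and
      (tendsto_natCast_atTop_atTop.eventually_ge_atTop ((m : ℝ) / (1 - ε))))).exists
    obtain ⟨k, rfl⟩ := Nat.exists_eq_add_of_le hmn
    rw [Nat.count_add, Nat.count_of_forall (n := k) fun i _ => hall _ (Nat.le_add_right m i)] at hn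
    rw [div_le_iff₀ (by linarith)] at hlarge
    push_cast at hn hlarge
    have : (0 : ℝ) ≤ Nat.count (fun i => shift^[i] x ∈ farFrom Y N ε) m := by positivity
    linarith
  obtain ⟨w, hwY, hwN, hw⟩ := exists_concatSeq_mismatches_le hY.1 hN hε.le x hgood
  obtain ⟨y, hy, hlt⟩ := hshadow w hwY hwN
  refine ⟨y, hy, dbar_le_of_eventually (d := 2 * N) ?_⟩
  filter_upwards [hvisit, eventually_mismatches_le_of_dbar_lt hlt] with n hn₁ hn₂
  have h₁ : (mismatches x y n : ℝ) ≤ mismatches x (concatSeq w) n + mismatches (concatSeq w) y n :=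
    by exact_mod_cast mismatches_triangle x (concatSeq w) y n
  linarith [hw n]

theorem exists_lt_of_iSup_iInf_lt {Z : Type*} {d : Z → Z → ℝ} (h0 : ∀ a b, 0 ≤ d a b)
    (h1 : ∀ a b, d a b ≤ 1) {P Q : Set Z} (hQ : Q.Nonempty) {c : ℝ}
    (h : ⨆ p : P, ⨅ q : Q, d p q < c) : ∀ p ∈ P, ∃ q ∈ Q, d p q < c := by
  intro p hp
  have := hQ.to_subtype
  obtain ⟨q, hq⟩ := exists_lt_of_ciInf_lt
    ((le_ciSup (bddAbove_range_iInf h0 h1 P Q) ⟨p, hp⟩).trans_lt h)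
  exact ⟨q, q.2, hq⟩

theorem iSup_iInf_le_of_forall_exists_le {Z : Type*} {d : Z → Z → ℝ} (h0 : ∀ a b, 0 ≤ d a b)
    {P Q : Set Z} (hP : P.Nonempty) {c : ℝ} (h : ∀ p ∈ P, ∃ q ∈ Q, d p q ≤ c) :
    ⨆ p : P, ⨅ q : Q, d p q ≤ c := by
  have := hP.to_subtype
  refine ciSup_le fun p => ?_
  obtain ⟨q, hq, hle⟩ := h p p.2
  exact ciInf_le_of_le ⟨0, by rintro _ ⟨b, rfl⟩; exact h0 _ _⟩ ⟨q, hq⟩ hle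

theorem IsJoining.swap {ξ : Measure ((ℕ → A) × (ℕ → A))} {μ ν : ProbabilityMeasure (ℕ → A)}
    (h : IsJoining ξ μ ν) : IsJoining (ξ.map Prod.swap) ν μ := by
  have hs : Measurable (shift : (ℕ → A) → ℕ → A) := continuous_shift.measurable
  refine ⟨?_, ?_, ?_⟩
  · conv_rhs => rw [← h.1]
    rw [Measure.map_map (hs.prodMap hs) measurable_swap,
      Measure.map_map measurable_swap (hs.prodMap hs)]
    rfl
  · rw [Measure.map_map measurable_fst measurable_swap, ← h.2.2]
    rfl
  · rw [Measure.map_map measurable_snd measurable_swap, ← h.2.1]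
    rfl

theorem dbarM_comm (μ ν : ProbabilityMeasure (ℕ → A)) : dbarM μ ν = dbarM ν μ := by
  have key : ∀ {μ ν : ProbabilityMeasure (ℕ → A)} {r : ℝ},
      (∃ ξ, IsJoining ξ μ ν ∧ r = (ξ {p | p.1 0 ≠ p.2 0}).toReal) →
      ∃ ξ, IsJoining ξ ν μ ∧ r = (ξ {p | p.1 0 ≠ p.2 0}).toReal := by
    rintro μ ν _ ⟨ξ, hξ, rfl⟩
    refine ⟨_, hξ.swap, ?_⟩
    rw [Measure.map_apply measurable_swap (measurableSet_coord_ne 0)]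
    simp only [Set.preimage_ofPred_eq, Prod.fst_swap, Prod.snd_swap, ne_comm]
  exact congrArg sInf (Set.ext fun r => ⟨key, key⟩)

theorem dbar_comm (x y : ℕ → A) : dbar x y = dbar y x := by
  simp only [dbar, ne_comm]

/-- for shift spaces with `d̄`-shadowing, `d̄_M^H(M_σ(X), M_σ(Y)) < ε²`
implies `d̄^H(X, Y) < 7ε`. -/
theorem statement8 (hA : 2 ≤ Fintype.card A) (X Y : Set (ℕ → A))
    (hX : ShiftSpace X) (hY : ShiftSpace Y)
    (hshX : DbarShadowing X) (hshY : DbarShadowing Y)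
    (eps : ℝ) (heps : 0 < eps)
    (h : hausdist dbarM (Msigma X) (Msigma Y) < eps ^ 2) :
    hausdist dbar X Y < 7 * eps := by

  rw [hausdist, max_lt_iff] at h ⊢
  have hmu := exists_lt_of_iSup_iInf_lt dbarM_nonneg dbarM_le_one (Msigma_nonempty hY) h.1
  have hnu := exists_lt_of_iSup_iInf_lt (d := fun ν μ => dbarM μ ν) (fun _ _ => dbarM_nonneg _ _)
    (fun _ _ => dbarM_le_one _ _) (Msigma_nonempty hX) h.2
  have hlt : 3 * eps < 7 * eps := by linarith
  refine ⟨(iSup_iInf_le_of_forall_exists_le dbar_nonneg hX.1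
    (exists_dbar_le hX hY hshY heps hmu)).trans_lt hlt,
    (iSup_iInf_le_of_forall_exists_le (d := fun y x => dbar x y) (fun _ _ => dbar_nonneg _ _)
      hY.1 fun y hy => ?_).trans_lt hlt⟩
  obtain ⟨x, hx, hle⟩ := exists_dbar_le hY hX hshX heps
    (fun ν hν => (hnu ν hν).imp fun μ hμ => ⟨hμ.1, dbarM_comm μ ν ▸ hμ.2⟩) y hy
  exact ⟨x, hx, dbar_comm x y ▸ hle⟩

end DbarPaper
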